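/- $L_{-3}(2) = \frac{2}{15} \sum_{k=1}^{\infty} \frac{48^k}{k(2k-1)\binom{4k}{2k}\binom{2k}{k}}$. -/

import Mathlib

open Filter Topology

/-- The Dirichlet L-value `L_{-3}(2) = ∑_{k ≥ 0} (1/(3k+1)^2 - 1/(3k+2)^2)`. -/
noncomputable def Lm3at2 : ℝ := ∑' k : ℕ, (1 / (3*(k:ℝ)+1)^2 - 1 / (3*(k:ℝ)+2)^2)

/-- term ratio in `k` of the WZ family -/
noncomputable def rhoWZ (m : ℝ) (k : ℕ) : ℝ :=
  12 * ((k:ℝ)+2) * (m+k+1) * (6*m+2*k+1) / ((2*k+3) * (6*m+4*k+5) * (6*m+4*k+7))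

/-- the WZ family (normalised) -/
noncomputable def vWZ (m : ℝ) : ℕ → ℝ
  | 0 => 12 / ((6*m+1) * (6*m+3))
  | k+1 => vWZ m k * rhoWZ m k

lemma rhoWZ_pos {m : ℝ} (hm : 0 ≤ m) (k : ℕ) : 0 < rhoWZ m k := by
  unfold rhoWZ; positivity

lemma vWZ_pos {m : ℝ} (hm : 0 ≤ m) (k : ℕ) : 0 < vWZ m k := by
  induction k with
  | zero => unfold vWZ; positivity
  | succ k ih => exact mul_pos ih (rhoWZ_pos hm k)

lemma rhoWZ_mono {m n : ℝ} (hm : 0 ≤ m) (hn : m ≤ n) (k : ℕ) : rhoWZ m k ≤ rhoWZ n k := by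
  obtain ⟨d, hd, rfl⟩ : ∃ d : ℝ, 0 ≤ d ∧ n = m + d := ⟨n - m, by linarith, by ring⟩
  have hk : (0:ℝ) ≤ k := Nat.cast_nonneg k
  unfold rhoWZ
  generalize (k:ℝ) = x at *
  rw [div_le_div_iff₀ (by positivity) (by positivity), ← sub_nonneg]
  have : 0 ≤ 12 * (x+2) * (2*x+3) * (((m+d)+x+1) * (6*(m+d)+2*x+1) * ((6*m+4*x+5) * (6*m+4*x+7))
     - (m+x+1) * (6*m+2*x+1) * ((6*(m+d)+4*x+5) * (6*(m+d)+4*x+7))) := by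
    apply mul_nonneg (by positivity)
    ring_nf
    positivity
  refine this.trans_eq ?_
  ring

lemma vWZ_step {m : ℝ} (hm : 0 ≤ m) (k : ℕ) :
    (m+1) * vWZ (m+1) k = vWZ m k * ((2*k+6*m+1)*(2*k+6*m+3)*(2*k+6*m+5)*(k+1+m)) /
      ((4*k+6*m+5)*(4*k+6*m+7)*(4*k+6*m+9)) := by
  induction k with
  | zero =>
    simp only [vWZ, Nat.cast_zero]
    have : 6*(m+1)+1 ≠ 0 := by positivity
    have : 6*(m+1)+3 ≠ 0 := by positivity
    field_simp
    ring
  | succ k ih =>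
    simp only [vWZ]
    rw [← mul_assoc, ih]
    unfold rhoWZ
    push_cast
    generalize vWZ m k = V
    have hk : (0:ℝ) ≤ k := Nat.cast_nonneg k
    generalize (k:ℝ) = x at *
    have h1 : 4*(x+1)+6*m+5 = 4*x+6*m+9 := by ring
    have h2 : 4*(x+1)+6*m+7 = 4*x+6*m+11 := by ring
    have h3 : 4*(x+1)+6*m+9 = 4*x+6*m+13 := by ring
    have h4 : 6*(m+1)+4*x+5 = 4*x+6*m+11 := by ring
    have h5 : 6*(m+1)+4*x+7 = 4*x+6*m+13 := by ring
    have h6 : 6*m+4*x+5 = 4*x+6*m+5 := by ring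
    have h7 : 6*m+4*x+7 = 4*x+6*m+7 := by ring
    rw [h1, h2, h3, h4, h5, h6, h7]
    field_simp
    ring

noncomputable def gWZ (m : ℝ) (k : ℕ) : ℝ :=
  -(((k:ℝ)+1+2*m)*(2*k+1)/(4*k+6*m+5)) * vWZ m k

lemma wz_id {m : ℝ} (hm : 0 ≤ m) (k : ℕ) :
    (m+1) * vWZ (m+1) k - m * vWZ m k = gWZ m (k+1) - gWZ m k := by
  rw [vWZ_step hm]
  unfold gWZ
  simp only [vWZ]
  unfold rhoWZ
  push_cast
  generalize vWZ m k = V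
  have hk : (0:ℝ) ≤ k := Nat.cast_nonneg k
  generalize (k:ℝ) = x at *
  have h1 : 4*(x+1)+6*m+5 = 4*x+6*m+9 := by ring
  have h6 : 6*m+4*x+5 = 4*x+6*m+5 := by ring
  have h7 : 6*m+4*x+7 = 4*x+6*m+7 := by ring
  rw [h1, h6, h7]
  field_simp
  ring

lemma rhoWZ_tendsto (m : ℝ) : Tendsto (rhoWZ m) atTop (𝓝 (3/4)) := by
  have hi : Tendsto (fun k : ℕ => ((k:ℝ))⁻¹) atTop (𝓝 0) := tendsto_inv_atTop_nhds_zero_nat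
  have key : Tendsto (fun k : ℕ => 12 * (1 + 2*((k:ℝ))⁻¹) * (1 + (m+1)*((k:ℝ))⁻¹) *
      (2 + (6*m+1)*((k:ℝ))⁻¹) / ((2+3*((k:ℝ))⁻¹) * (4+(6*m+5)*((k:ℝ))⁻¹) * (4+(6*m+7)*((k:ℝ))⁻¹)))
      atTop (𝓝 (12 * (1 + 2*0) * (1 + (m+1)*0) *
      (2 + (6*m+1)*0) / ((2+3*0) * (4+(6*m+5)*0) * (4+(6*m+7)*0)))) := by
    apply Tendsto.div
    · exact ((tendsto_const_nhds.mul (tendsto_const_nhds.add (hi.const_mul _))).mul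
        (tendsto_const_nhds.add (hi.const_mul _))).mul (tendsto_const_nhds.add (hi.const_mul _))
    · exact ((tendsto_const_nhds.add (hi.const_mul _)).mul
        (tendsto_const_nhds.add (hi.const_mul _))).mul (tendsto_const_nhds.add (hi.const_mul _))
    · norm_num
  have e : (12 * (1 + 2*0) * (1 + (m+1)*0) *
      (2 + (6*m+1)*0) / ((2+3*0) * (4+(6*m+5)*0) * (4+(6*m+7)*0)) : ℝ) = 3/4 := by norm_num
  rw [e] at key
  refine key.congr' ?_
  filter_upwards [eventually_gt_atTop 0] with k hk
  have hk' : (k:ℝ) ≠ 0 := by positivity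
  unfold rhoWZ
  rw [← mul_div_mul_right _ _ (pow_ne_zero 3 hk')]
  congr 1
  · field_simp
    ring
  · field_simp
    ring

lemma kv_summable {m : ℝ} (hm : 0 ≤ m) : Summable (fun k : ℕ => ((k:ℝ)+1) * vWZ m k) := by
  have hp : ∀ k : ℕ, 0 < ((k:ℝ)+1) * vWZ m k := fun k => mul_pos (by positivity) (vWZ_pos hm k)
  refine summable_of_ratio_test_tendsto_lt_one (l := 3/4) (by norm_num)
    (Eventually.of_forall fun k => (hp k).ne') ?_
  have hi : Tendsto (fun k : ℕ => 1 + 1 / ((k:ℝ)+1)) atTop (𝓝 (1+0)) :=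
    tendsto_const_nhds.add tendsto_one_div_add_atTop_nhds_zero_nat
  have := hi.mul (rhoWZ_tendsto m)
  rw [show (1+0)*(3/4:ℝ) = 3/4 by norm_num] at this
  refine this.congr fun k => ?_
  rw [Real.norm_of_nonneg (hp _).le, Real.norm_of_nonneg (hp _).le]
  simp only [vWZ]
  have := (vWZ_pos hm k).ne'
  push_cast
  field_simp

lemma v_summable {m : ℝ} (hm : 0 ≤ m) : Summable (vWZ m) := by
  refine Summable.of_nonneg_of_le (fun k => (vWZ_pos hm k).le) (fun k => ?_) (kv_summable hm)
  have := (vWZ_pos hm k).le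
  have hk : (0:ℝ) ≤ k := Nat.cast_nonneg k
  nlinarith

lemma g_tendsto {m : ℝ} (hm : 0 ≤ m) : Tendsto (gWZ m) atTop (𝓝 0) := by
  have h := (kv_summable hm).tendsto_atTop_zero.const_mul (1+2*m)
  rw [mul_zero] at h
  refine squeeze_zero_norm (fun k => ?_) h
  have hv := (vWZ_pos hm k).le
  have hk : (0:ℝ) ≤ k := Nat.cast_nonneg k
  unfold gWZ
  rw [norm_mul, norm_neg, Real.norm_of_nonneg hv, Real.norm_of_nonneg (by positivity), ← mul_assoc]
  refine mul_le_mul_of_nonneg_right ?_ hv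
  rw [div_le_iff₀ (by positivity)]
  generalize (k:ℝ) = x at *
  rw [← sub_nonneg]
  ring_nf
  positivity

noncomputable def phiWZ (m : ℝ) : ℝ := m * ∑' k, vWZ m k

noncomputable def gg (m : ℝ) : ℝ := 4 / ((6*m+1)*(6*m+5))

lemma phi_step {m : ℝ} (hm : 0 ≤ m) : phiWZ (m+1) = phiWZ m + gg m := by
  have h1 := ((v_summable (m := m+1) (by linarith)).hasSum.mul_left (m+1)).sub
    ((v_summable hm).hasSum.mul_left m)
  have h2 := h1.tendsto_sum_nat
  have h3 : Tendsto (fun n => ∑ i ∈ Finset.range n,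
      ((m+1) * vWZ (m+1) i - m * vWZ m i)) atTop (𝓝 (0 - gWZ m 0)) := by
    have : (fun n => ∑ i ∈ Finset.range n, ((m+1) * vWZ (m+1) i - m * vWZ m i))
        = fun n => gWZ m n - gWZ m 0 := by
      funext n
      rw [Finset.sum_congr rfl (fun i _ => wz_id hm i), Finset.sum_range_sub]
    rw [this]
    exact (g_tendsto hm).sub_const _
  have h4 := tendsto_nhds_unique h2 h3
  have h5 : gWZ m 0 = - gg m := by
    unfold gWZ gg
    simp only [vWZ, Nat.cast_zero]
    field_simp
    ring
  unfold phiWZ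
  rw [h5] at h4
  linarith

lemma sqv_mono {m n : ℝ} (hm : 0 < m) (hn : m ≤ n) (k : ℕ) :
    m^2 * vWZ m k ≤ n^2 * vWZ n k := by
  have hn0 : 0 < n := by linarith
  induction k with
  | zero =>
    simp only [vWZ]
    rw [mul_div_assoc', mul_div_assoc', div_le_div_iff₀ (by positivity) (by positivity)]
    have h1 : m * n ≤ n * n := by nlinarith
    have h2 : m^2 ≤ n^2 := by nlinarith
    have h3 : m^2 * n ≤ n^2 * m := by nlinarith [mul_pos hm hn0]
    nlinarith
  | succ k ih =>
    simp only [vWZ]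
    rw [← mul_assoc, ← mul_assoc]
    exact mul_le_mul ih (rhoWZ_mono hm.le hn k) (rhoWZ_pos hm.le k).le
      (mul_nonneg (by positivity) (vWZ_pos hn0.le k).le)

lemma phi_mono {m n : ℝ} (hm : 0 < m) (hn : m ≤ n) : m * phiWZ m ≤ n * phiWZ n := by
  have hn0 : 0 < n := by linarith
  unfold phiWZ
  rw [← mul_assoc, ← mul_assoc, ← tsum_mul_left, ← tsum_mul_left]
  refine Summable.tsum_le_tsum (fun k => ?_) ((v_summable hm.le).mul_left _)
    ((v_summable hn0.le).mul_left _)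
  have := sqv_mono hm hn k
  nlinarith

lemma v_le {m : ℝ} (hm : 0 ≤ m) (hm1 : m ≤ 1) (k : ℕ) : vWZ m k ≤ 21 * vWZ 1 k := by
  induction k with
  | zero =>
    simp only [vWZ]
    rw [div_le_iff₀ (by positivity)]
    nlinarith
  | succ k ih =>
    simp only [vWZ]
    rw [← mul_assoc]
    exact mul_le_mul ih (rhoWZ_mono hm hm1 k) (rhoWZ_pos hm k).le
      (mul_nonneg (by positivity) (vWZ_pos zero_le_one k).le)

lemma v_cont (k : ℕ) : ContinuousWithinAt (fun m => vWZ m k) (Set.Ici 0) 0 := by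
  apply ContinuousAt.continuousWithinAt
  induction k with
  | zero =>
    simp only [vWZ]
    apply ContinuousAt.div (by fun_prop) (by fun_prop); norm_num
  | succ k ih =>
    simp only [vWZ]
    refine ih.mul ?_
    unfold rhoWZ
    apply ContinuousAt.div (by fun_prop) (by fun_prop)
    positivity

lemma V_tendsto : Tendsto (fun m => ∑' k, vWZ m k) (𝓝[>] 0) (𝓝 (∑' k, vWZ 0 k)) := by
  refine tendsto_tsum_of_dominated_convergence (bound := fun k => 21 * vWZ 1 k)
    ((v_summable zero_le_one).mul_left _) (fun k => ?_) ?_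
  · exact (v_cont k).mono_left (nhdsWithin_mono _ Set.Ioi_subset_Ici_self)
  · have : Set.Ioc (0:ℝ) 1 ∈ 𝓝[>] (0:ℝ) := Ioc_mem_nhdsGT one_pos
    filter_upwards [this] with m hm k
    rw [Real.norm_of_nonneg (vWZ_pos hm.1.le k).le]
    exact v_le hm.1.le hm.2 k

lemma phi_sum {h : ℝ} (hh : 0 ≤ h) (J : ℕ) :
    phiWZ (h + J) = phiWZ h + ∑ j ∈ Finset.range J, gg (h + j) := by
  induction J with
  | zero => simp
  | succ J ih =>
    rw [Finset.sum_range_succ, ← add_assoc, ← ih, Nat.cast_succ, ← add_assoc,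
      phi_step (by positivity)]

lemma inv_sq_summable : Summable (fun j : ℕ => 1 / ((j:ℝ)+1)^2) := by
  have := (summable_nat_add_iff 1).2 (Real.summable_one_div_nat_pow.2 (one_lt_two))
  refine this.congr fun j => ?_
  push_cast; rfl

lemma gg_le {h : ℝ} (hh : 0 ≤ h) (j : ℕ) : gg (h + j) ≤ 4 * (1 / ((j:ℝ)+1)^2) := by
  unfold gg
  rw [mul_one_div, div_le_div_iff₀ (by positivity) (by positivity)]
  have hj : (0:ℝ) ≤ j := Nat.cast_nonneg j
  generalize (j:ℝ) = x at *
  rw [← sub_nonneg]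
  ring_nf
  positivity

lemma gg_pos {h : ℝ} (hh : 0 ≤ h) : 0 < gg h := by
  unfold gg; positivity

lemma gg_summable {h : ℝ} (hh : 0 ≤ h) : Summable (fun j : ℕ => gg (h + j)) :=
  Summable.of_nonneg_of_le (fun j => (gg_pos (by positivity)).le) (gg_le hh)
    (inv_sq_summable.mul_left 4)

lemma phi_nat_tendsto : Tendsto (fun J : ℕ => phiWZ J) atTop (𝓝 (∑' j : ℕ, gg j)) := by
  have h0 : Summable (fun j : ℕ => gg j) := by simpa using gg_summable le_rfl
  refine h0.hasSum.tendsto_sum_nat.congr fun J => ?_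
  have := phi_sum le_rfl J
  simp only [zero_add] at this
  rw [this]
  simp [phiWZ]

lemma phi_shift_tendsto {h : ℝ} (hh : 0 < h) (h1 : h ≤ 1) :
    Tendsto (fun J : ℕ => phiWZ (h + J)) atTop (𝓝 (∑' j : ℕ, gg j)) := by
  have hi : Tendsto (fun J : ℕ => ((J:ℝ))⁻¹) atTop (𝓝 0) := tendsto_inv_atTop_nhds_zero_nat
  have l1 : Tendsto (fun J : ℕ => (1 + h * (J:ℝ)⁻¹)⁻¹ * phiWZ J) atTop
      (𝓝 ((1 + h * 0)⁻¹ * ∑' j : ℕ, gg j)) :=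
    ((tendsto_const_nhds.add (hi.const_mul h)).inv₀ (by simp)).mul phi_nat_tendsto
  have l2 : Tendsto (fun J : ℕ => (1 + (J:ℝ)⁻¹) * (1 + h * (J:ℝ)⁻¹)⁻¹ * phiWZ ((J+1 : ℕ) : ℝ)) atTop
      (𝓝 ((1 + 0) * (1 + h * 0)⁻¹ * ∑' j : ℕ, gg j)) :=
    ((tendsto_const_nhds.add hi).mul
      ((tendsto_const_nhds.add (hi.const_mul h)).inv₀ (by simp))).mul
      (phi_nat_tendsto.comp (tendsto_add_atTop_nat 1))
  simp only [mul_zero, add_zero, inv_one, one_mul] at l1 l2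
  refine tendsto_of_tendsto_of_tendsto_of_le_of_le' l1 l2 ?_ ?_
  · filter_upwards [eventually_gt_atTop 0] with J hJ
    have hJ' : (0:ℝ) < J := by positivity
    have := phi_mono (m := J) (n := h + J) hJ' (by linarith)
    have e : (1 + h * (J:ℝ)⁻¹)⁻¹ = J / (h + J) := by field_simp; ring
    rw [e, div_mul_eq_mul_div, div_le_iff₀ (by positivity)]
    linarith
  · filter_upwards [eventually_gt_atTop 0] with J hJ
    have hJ' : (0:ℝ) < J := by positivity
    have := phi_mono (m := h + J) (n := ((J+1 : ℕ) : ℝ)) (by positivity) (by push_cast; linarith)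
    have e : (1 + (J:ℝ)⁻¹) * (1 + h * (J:ℝ)⁻¹)⁻¹ = ((J+1 : ℕ) : ℝ) / (h + J) := by
      push_cast; field_simp; ring
    rw [e, div_mul_eq_mul_div, le_div_iff₀ (by positivity)]
    linarith

noncomputable def dd (h : ℝ) (j : ℕ) : ℝ :=
  6 / ((6*j+1)*(6*j+6*h+1)) - 6 / ((6*j+5)*(6*j+6*h+5))

lemma V_eq {h : ℝ} (hh : 0 < h) (h1 : h ≤ 1) : ∑' k, vWZ h k = ∑' j, dd h j := by
  have h0 : Summable (fun j : ℕ => gg j) := by simpa using gg_summable le_rfl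
  have hs := gg_summable hh.le
  have a1 : Tendsto (fun J : ℕ => phiWZ (h + J)) atTop
      (𝓝 (phiWZ h + ∑' j : ℕ, gg (h + j))) := by
    refine (hs.hasSum.tendsto_sum_nat.const_add (phiWZ h)).congr fun J => ?_
    rw [phi_sum hh.le]
  have a2 := tendsto_nhds_unique a1 (phi_shift_tendsto hh h1)
  have a3 : phiWZ h = ∑' j : ℕ, (gg j - gg (h + j)) := by
    rw [h0.tsum_sub hs]; linarith
  have a4 : ∀ j : ℕ, gg j - gg (h + j) = h * dd h j := by
    intro j
    unfold gg dd
    have e1 : 6*(h+(j:ℝ))+1 = 6*j+6*h+1 := by ring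
    have e2 : 6*(h+(j:ℝ))+5 = 6*j+6*h+5 := by ring
    rw [e1, e2]
    field_simp
    ring
  simp_rw [a4] at a3
  rw [tsum_mul_left] at a3
  exact mul_left_cancel₀ hh.ne' a3

lemma dd_nonneg {h : ℝ} (hh : 0 ≤ h) (j : ℕ) : 0 ≤ dd h j := by
  unfold dd
  rw [sub_nonneg]
  gcongr <;> norm_num

lemma dd_le {h : ℝ} (hh : 0 ≤ h) (j : ℕ) : dd h j ≤ 6 * (1 / ((j:ℝ)+1)^2) := by
  have hj : (0:ℝ) ≤ j := Nat.cast_nonneg j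
  have h2 : 6 / ((6*(j:ℝ)+1)*(6*j+6*h+1)) ≤ 6 * (1 / ((j:ℝ)+1)^2) := by
    rw [mul_one_div]
    rw [sq]
    gcongr
    · linarith
    · linarith
  have h3 : 0 ≤ 6 / ((6*(j:ℝ)+5)*(6*j+6*h+5)) := by positivity
  unfold dd
  linarith

lemma D_tendsto : Tendsto (fun h => ∑' j, dd h j) (𝓝[>] 0) (𝓝 (∑' j, dd 0 j)) := by
  refine tendsto_tsum_of_dominated_convergence (bound := fun j : ℕ => 6 * (1 / ((j:ℝ)+1)^2))
    (inv_sq_summable.mul_left _) (fun j => ?_) ?_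
  · have : ContinuousAt (fun h => dd h j) 0 := by
      unfold dd
      apply ContinuousAt.sub
      · apply ContinuousAt.div (by fun_prop) (by fun_prop); positivity
      · apply ContinuousAt.div (by fun_prop) (by fun_prop); positivity
    exact this.tendsto.mono_left nhdsWithin_le_nhds
  · filter_upwards [self_mem_nhdsWithin] with h hh j
    rw [Real.norm_of_nonneg (dd_nonneg (le_of_lt hh) j)]
    exact dd_le (le_of_lt hh) j

lemma V0_eq : ∑' k, vWZ 0 k = ∑' j, dd 0 j := by
  refine tendsto_nhds_unique V_tendsto (D_tendsto.congr' ?_)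
  filter_upwards [Ioc_mem_nhdsGT (one_pos (α := ℝ))] with h hh
  exact (V_eq hh.1 hh.2).symm

lemma L_eq : ∑' j, dd 0 j = 15/2 * Lm3at2 := by
  have hle : ∀ k : ℕ, (1 / (3*(k:ℝ)+1)^2 - 1 / (3*(k:ℝ)+2)^2) ≤ 1 / ((k:ℝ)+1)^2 := by
    intro k
    have h2 : 1 / (3*(k:ℝ)+1)^2 ≤ 1 / ((k:ℝ)+1)^2 := by
      have hj : (0:ℝ) ≤ k := Nat.cast_nonneg k
      gcongr
      linarith
    have h3 : 0 ≤ 1 / (3*(k:ℝ)+2)^2 := by positivity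
    linarith
  have hnn : ∀ k : ℕ, 0 ≤ (1 / (3*(k:ℝ)+1)^2 - 1 / (3*(k:ℝ)+2)^2) := by
    intro k
    rw [sub_nonneg]
    gcongr
    norm_num
  have hs : Summable (fun k : ℕ => (1 / (3*(k:ℝ)+1)^2 - 1 / (3*(k:ℝ)+2)^2)) :=
    Summable.of_nonneg_of_le hnn hle inv_sq_summable
  obtain ⟨a, ha⟩ : ∃ a : ℕ → ℝ, ∀ k, a k = 1 / (3*(k:ℝ)+1)^2 - 1 / (3*(k:ℝ)+2)^2 :=
    ⟨_, fun _ => rfl⟩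
  have hL : Lm3at2 = ∑' k, a k := by
    unfold Lm3at2
    exact (tsum_congr ha).symm
  replace hs : Summable a := hs.congr fun k => (ha k).symm
  have he : Summable (fun j : ℕ => a (2*j)) :=
    hs.comp_injective (i := fun j : ℕ => 2*j) (fun a b h => by simpa using h)
  have ho : Summable (fun j : ℕ => a (2*j+1)) :=
    hs.comp_injective (i := fun j : ℕ => 2*j+1) (fun a b h => by simpa using h)
  have h1 := tsum_even_add_odd he ho
  have hd : ∀ j : ℕ, dd 0 j = 6 * ((a (2*j) + a (2*j+1)) + 1/4 * a j) := by
    intro j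
    rw [ha, ha, ha]
    unfold dd
    push_cast
    have e1 : 3*(2*(j:ℝ))+2 = 2*(3*j+1) := by ring
    have e2 : 3*(2*(j:ℝ)+1)+1 = 2*(3*j+2) := by ring
    have e3 : 3*(2*(j:ℝ)+1)+2 = 6*j+5 := by ring
    have e4 : 3*(2*(j:ℝ))+1 = 6*j+1 := by ring
    rw [e1, e2, e3, e4]
    simp only [mul_zero, add_zero]
    have f : ∀ a : ℝ, 6 / (a * a) = 6 * (1 / a^2) := fun a => by rw [sq, mul_one_div]
    have f2 : ∀ a : ℝ, 1 / (2 * a)^2 = 1/4 * (1 / a^2) := fun a => by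
      rw [mul_pow, ← one_div_mul_one_div]; norm_num
    rw [f, f, f2, f2]
    ring
  rw [tsum_congr hd, tsum_mul_left, (he.add ho).tsum_add (hs.mul_left _), he.tsum_add ho, h1,
    tsum_mul_left, hL]
  ring

lemma v0_eq (k : ℕ) : vWZ 0 k = (48:ℝ)^(k+1) /
        (((k:ℝ)+1) * (2*((k:ℝ)+1) - 1) * ((4*(k+1)).choose (2*(k+1)) : ℝ) *
          ((2*(k+1)).choose (k+1) : ℝ)) := by
  have hc : ∀ n : ℕ, ((2*n).choose n : ℝ) = (Nat.centralBinom n : ℝ) := fun n => by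
    rw [Nat.centralBinom_eq_two_mul_choose]
  have hc4 : ∀ n : ℕ, ((4*n).choose (2*n) : ℝ) = (Nat.centralBinom (2*n) : ℝ) := fun n => by
    rw [Nat.centralBinom_eq_two_mul_choose]; ring_nf
  rw [hc, hc4]
  induction k with
  | zero =>
    have a1 : Nat.centralBinom (2*(0+1)) = 6 := by decide
    have a2 : Nat.centralBinom (0+1) = 2 := by decide
    rw [a1, a2]; norm_num [vWZ]
  | succ k ih =>
    simp only [vWZ]
    rw [ih]
    have b1 : ((k:ℝ)+1+1) * (Nat.centralBinom (k+1+1) : ℝ)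
        = 2 * (2*((k:ℝ)+1)+1) * (Nat.centralBinom (k+1) : ℝ) := by
      exact_mod_cast Nat.succ_mul_centralBinom_succ (k+1)
    have b2 : (2*((k:ℝ)+1)+1) * (Nat.centralBinom (2*(k+1)+1) : ℝ)
        = 2 * (2*(2*((k:ℝ)+1))+1) * (Nat.centralBinom (2*(k+1)) : ℝ) := by
      exact_mod_cast Nat.succ_mul_centralBinom_succ (2*(k+1))
    have b3 : (2*((k:ℝ)+1)+1+1) * (Nat.centralBinom (2*(k+1+1)) : ℝ)
        = 2 * (2*(2*((k:ℝ)+1)+1)+1) * (Nat.centralBinom (2*(k+1)+1) : ℝ) := by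
      exact_mod_cast Nat.succ_mul_centralBinom_succ (2*(k+1)+1)
    have p1 : (0:ℝ) < Nat.centralBinom (k+1) := by exact_mod_cast Nat.centralBinom_pos _
    have p2 : (0:ℝ) < Nat.centralBinom (2*(k+1)) := by exact_mod_cast Nat.centralBinom_pos _
    have hk : (0:ℝ) ≤ k := Nat.cast_nonneg k
    have c1 : (Nat.centralBinom (k+1+1) : ℝ)
        = 2 * (2*k+3) * (Nat.centralBinom (k+1) : ℝ) / (k+2) := by
      rw [eq_div_iff (by positivity)]; linarith
    have c2 : (Nat.centralBinom (2*(k+1)+1) : ℝ)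
        = 2 * (4*k+5) * (Nat.centralBinom (2*(k+1)) : ℝ) / (2*k+3) := by
      rw [eq_div_iff (by positivity)]; linarith
    have c3 : (Nat.centralBinom (2*(k+1+1)) : ℝ)
        = (4*k+7) * (Nat.centralBinom (2*(k+1)+1) : ℝ) / (k+2) := by
      rw [eq_div_iff (by positivity)]; linarith
    rw [c3, c2, c1]
    generalize (Nat.centralBinom (k+1) : ℝ) = A at *
    generalize (Nat.centralBinom (2*(k+1)) : ℝ) = B at *
    unfold rhoWZ
    push_cast
    rw [pow_succ (48:ℝ) (k+1)]
    generalize (48:ℝ)^(k+1) = P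
    generalize (k:ℝ) = x at *
    have e1 : 2*(x+1)-1 = 2*x+1 := by ring
    have e2 : 2*(x+1+1)-1 = 2*x+3 := by ring
    have e3 : x+1+1 = x+2 := by ring
    rw [e1, e2, e3]
    simp only [mul_zero, zero_add]
    field_simp
    ring

theorem stmt_19 :
    Tendsto (fun N => ∑ k ∈ Finset.range N,
      (2/15) * (48:ℝ)^(k+1) /
        (((k:ℝ)+1) * (2*((k:ℝ)+1) - 1) * ((4*(k+1)).choose (2*(k+1)) : ℝ) *
          ((2*(k+1)).choose (k+1) : ℝ)))
      atTop (𝓝 Lm3at2) := by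
  have h := ((v_summable le_rfl).hasSum.mul_left (2/15 : ℝ)).tendsto_sum_nat
  rw [V0_eq, L_eq] at h
  have e : (2/15 : ℝ) * (15/2 * Lm3at2) = Lm3at2 := by ring
  rw [e] at h
  refine h.congr fun N => Finset.sum_congr rfl fun k _ => ?_
  rw [v0_eq, mul_div_assoc]
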